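/- arXiv:2509.13264 — 2 statements merged into one kernel-verified Lean document; each statement's English description precedes it below -/
import Mathlib

section
/- Let p be an odd prime, let λ be a bar-partition with p-bar core λ_(p̄) and p-bar cocore λ^[p̄], and let σ be a σ_p-type automorphism of ℚ̄. If sgn(λ_(p̄)) = −1 and sgn(λ^[p̄]) = −1, then τ(λ,σ) = (−1)^((p−1)/2)·τ(λ_(p̄),σ)·τ(λ^[p̄],σ). -/
open scoped BigOperators

/-- A bar-partition: a finite set of distinct positive parts. -/
structure BarPartition where
  parts : Finset ℕ
  zero_not_mem : 0 ∉ parts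

namespace BarPartition

/-- The size `|λ|` of a bar-partition: the sum of its parts. -/
def size (l : BarPartition) : ℕ := ∑ a ∈ l.parts, a

/-- The length `ℓ(λ)` of a bar-partition: its number of parts. -/
def length (l : BarPartition) : ℕ := l.parts.card

/-- The sign `sgn(λ) = (-1)^(|λ| - ℓ(λ))` of a bar-partition. -/
def sgn (l : BarPartition) : ℤ := (-1) ^ (l.size - l.length)

/-- The empty bar-partition. -/
def empty : BarPartition := ⟨∅, by simp⟩

end BarPartition

/-- One `t`-bar removal step: replace a part `a > t` by `a - t` (if `a - t` is not already a
part), delete a part equal to `t`, or delete two parts whose sum is `t`. -/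
def BarRemoval (t : ℕ) (μ ν : BarPartition) : Prop :=
  (∃ a ∈ μ.parts, t < a ∧ a - t ∉ μ.parts ∧ ν.parts = insert (a - t) (μ.parts.erase a)) ∨
  (t ∈ μ.parts ∧ ν.parts = μ.parts.erase t) ∨
  (∃ a ∈ μ.parts, ∃ b ∈ μ.parts, a ≠ b ∧ a + b = t ∧ ν.parts = (μ.parts.erase a).erase b)

/-- A `t`-bar core: a bar-partition admitting no `t`-bar removal. -/
def IsBarCore (t : ℕ) (κ : BarPartition) : Prop := ∀ ν, ¬ BarRemoval t κ ν

/-- `κ` is the `t`-bar core of `λ`: it is obtained from `λ` by a (maximal) sequence of `t`-bar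
removals and admits no further removal. -/
def IsBarCoreOf (t : ℕ) (l κ : BarPartition) : Prop :=
  Relation.ReflTransGen (BarRemoval t) l κ ∧ IsBarCore t κ

/-- `λ` has empty `t`-bar core. -/
def HasEmptyBarCore (t : ℕ) (l : BarPartition) : Prop :=
  Relation.ReflTransGen (BarRemoval t) l BarPartition.empty

/-- The twisted runner at `r` (for `1 ≤ r ≤ (t-1)/2`) of the `t`-bar-abacus of `λ`, as a set
of integers: position `i ≥ 0` (above the fence) carries a bead iff `t*i + r` is a part of `λ`,
and position `i < 0` (slot `j = -(i+1)` below the fence) carries a bead iff `t*j + (t - r)` is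
*not* a part of `λ` (beads and empty slots of runner `t - r` are interchanged). -/
def twistedRunner (t r : ℕ) (l : BarPartition) : Set ℤ :=
  {i : ℤ | (0 ≤ i ∧ t * i.toNat + r ∈ l.parts) ∨
           (i < 0 ∧ t * (-(i + 1)).toNat + (t - r) ∉ l.parts)}

/-- Two bar-partitions have the same `t`-bar quotient: the runners `0` agree, and for each
`1 ≤ r ≤ (t-1)/2` the twisted runners differ by a shift (the shift by the unique balancing
integer produces the Frobenius symbol of the quotient component, so shift-equivalent twisted
runners are exactly those with equal quotient component). -/
def HasSameBarQuotient (t : ℕ) (l m : BarPartition) : Prop :=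
  (∀ k : ℕ, t * k ∈ l.parts ↔ t * k ∈ m.parts) ∧
  ∀ r : ℕ, 1 ≤ r → 2 * r < t →
    ∃ c : ℤ, twistedRunner t r m = (fun i => i + c) '' twistedRunner t r l

/-- `m` is the `t`-bar cocore of `l`: the unique bar-partition with empty `t`-bar core and the
same `t`-bar quotient as `l`. -/
def IsBarCocoreOf (t : ℕ) (l m : BarPartition) : Prop :=
  HasEmptyBarCore t m ∧ HasSameBarQuotient t l m

/-- A fixed algebraic closure of `ℚ`. -/
abbrev Qbar := AlgebraicClosure ℚ

/-- `σ` is a `σ_p`-type automorphism of `ℚ̄`: it raises every root of unity of order coprime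
to `p` to its `p`-th power, and fixes every root of unity of `p`-power order. -/
def IsSigmaPType (p : ℕ) (σ : Qbar ≃ₐ[ℚ] Qbar) : Prop :=
  (∀ (ζ : Qbar) (n : ℕ), 0 < n → Nat.Coprime n p → ζ ^ n = 1 → σ ζ = ζ ^ p) ∧
  (∀ (ζ : Qbar) (k : ℕ), ζ ^ (p ^ k) = 1 → σ ζ = ζ)

/-- The discriminant `D_λ` attached to a bar-partition `λ` of `n` with `k` parts:
`2·(−1)^((n−k+1)/2)·λ₁⋯λ_k` if `n − k` is odd, and `(−1)^((n−k)/2)·λ₁⋯λ_k` if `n − k` is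
even. -/
def barDisc (l : BarPartition) : ℤ :=
  if (l.size - l.length) % 2 = 1 then
    2 * (-1) ^ ((l.size - l.length + 1) / 2) * ∏ a ∈ l.parts, (a : ℤ)
  else
    (-1) ^ ((l.size - l.length) / 2) * ∏ a ∈ l.parts, (a : ℤ)

/-- A chosen square root of an integer in `Qbar`. -/
noncomputable def sqq (D : ℤ) : Qbar :=
  Classical.choose (IsAlgClosed.exists_pow_nat_eq (D : Qbar) (n := 2) two_pos)

theorem sqq_sq (D : ℤ) : sqq D ^ 2 = (D : Qbar) :=
  Classical.choose_spec (IsAlgClosed.exists_pow_nat_eq (D : Qbar) (n := 2) two_pos)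

open Classical in
/-- The sign by which `σ` acts on square roots of `D`. -/
noncomputable def sg (σ : Qbar ≃ₐ[ℚ] Qbar) (D : ℤ) : ℤ :=
  if σ (sqq D) = sqq D then 1 else -1

theorem sg_pm (σ : Qbar ≃ₐ[ℚ] Qbar) (D : ℤ) : sg σ D = 1 ∨ sg σ D = -1 := by
  unfold sg; split_ifs <;> simp

theorem sg_sq (σ : Qbar ≃ₐ[ℚ] Qbar) (D : ℤ) : sg σ D * sg σ D = 1 := by
  rcases sg_pm σ D with h | h <;> rw [h] <;> rfl

theorem sg_spec (σ : Qbar ≃ₐ[ℚ] Qbar) (D : ℤ) (α : Qbar) (h : α ^ 2 = (D : Qbar)) :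
    σ α = (sg σ D : Qbar) * α := by
  have h0 : σ (sqq D) = (sg σ D : Qbar) * sqq D := by
    have h1 : σ (sqq D) ^ 2 = sqq D ^ 2 := by
      rw [← map_pow, sqq_sq, map_intCast]
    unfold sg
    split_ifs with hh
    · simp [hh]
    · rcases sq_eq_sq_iff_eq_or_eq_neg.1 h1 with h2 | h2
      · exact absurd h2 hh
      · simp [h2]
  rcases sq_eq_sq_iff_eq_or_eq_neg.1 (h.trans (sqq_sq D).symm) with h2 | h2
  · rw [h2, h0]
  · rw [h2, map_neg, h0]; ring

theorem sg_eq (σ : Qbar ≃ₐ[ℚ] Qbar) (D : ℤ) (hD : D ≠ 0) (α : Qbar)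
    (h : α ^ 2 = (D : Qbar)) (e : ℤ) (he : σ α = (e : Qbar) * α) : sg σ D = e := by
  have h1 := sg_spec σ D α h
  have hα : α ≠ 0 := by
    rintro rfl
    apply hD
    have : (D : Qbar) = 0 := by rw [← h]; simp
    exact_mod_cast this
  have := mul_right_cancel₀ hα (h1.symm.trans he)
  exact_mod_cast this

theorem sg_mul (σ : Qbar ≃ₐ[ℚ] Qbar) (D E : ℤ) (hD : D ≠ 0) (hE : E ≠ 0) :
    sg σ (D * E) = sg σ D * sg σ E := by
  apply sg_eq σ _ (mul_ne_zero hD hE) (sqq D * sqq E)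
  · rw [mul_pow, sqq_sq, sqq_sq]; push_cast; ring
  · rw [map_mul, sg_spec σ D _ (sqq_sq D), sg_spec σ E _ (sqq_sq E)]; push_cast; ring

theorem sg_one (σ : Qbar ≃ₐ[ℚ] Qbar) : sg σ 1 = 1 := by
  apply sg_eq σ 1 one_ne_zero 1 <;> simp

theorem sg_pow (σ : Qbar ≃ₐ[ℚ] Qbar) (D : ℤ) (hD : D ≠ 0) (n : ℕ) :
    sg σ (D ^ n) = sg σ D ^ n := by
  induction n with
  | zero => simp [sg_one]
  | succ k ih => rw [pow_succ, sg_mul σ _ _ (pow_ne_zero k hD) hD, ih, pow_succ]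

theorem sg_prod (σ : Qbar ≃ₐ[ℚ] Qbar) (s : Finset ℕ) (hs : 0 ∉ s) :
    sg σ (∏ a ∈ s, (a : ℤ)) = ∏ a ∈ s, sg σ (a : ℤ) := by
  induction s using Finset.induction_on with
  | empty => simp [sg_one]
  | insert a s ha ih =>
    simp only [Finset.mem_insert, not_or] at hs
    rw [Finset.prod_insert ha, Finset.prod_insert ha, sg_mul, ih hs.2]
    · exact_mod_cast Ne.symm hs.1
    · rw [Finset.prod_ne_zero_iff]
      intro b hb h
      have : b = 0 := by exact_mod_cast h
      exact hs.2 (this ▸ hb)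

section NT
variable (p : ℕ) (hp : p.Prime) (hpodd : Odd p) (σ : Qbar ≃ₐ[ℚ] Qbar) (hσ : IsSigmaPType p σ)

theorem sg_neg_one (hpodd : Odd p) (hσ : IsSigmaPType p σ) :
    sg σ (-1) = (-1) ^ ((p - 1) / 2) := by
  obtain ⟨k, hk⟩ := hpodd
  have hs := sqq_sq (-1)
  apply sg_eq σ (-1) (by norm_num) (sqq (-1)) hs
  have h4 : sqq (-1) ^ 4 = 1 := by
    rw [show 4 = 2 * 2 by rfl, pow_mul, hs]; simp
  have hco : Nat.Coprime 4 p := by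
    rw [show 4 = 2 ^ 2 by rfl]
    exact Nat.Coprime.pow_left 2 ((Nat.coprime_two_left).2 ⟨k, hk⟩)
  rw [hσ.1 _ 4 (by norm_num) hco h4, hk, pow_succ, pow_mul, hs]
  rw [show (2 * k + 1 - 1) / 2 = k by omega]
  push_cast; rfl

theorem sg_two [Fact p.Prime] (hpodd : Odd p) (hσ : IsSigmaPType p σ) :
    sg σ 2 = legendreSym p 2 := by
  obtain ⟨z, hz⟩ := IsAlgClosed.exists_pow_nat_eq (-1 : Qbar) (n := 4) (by norm_num)
  have hp2 : p ≠ 2 := by rintro rfl; exact absurd hpodd (by decide)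
  rw [legendreSym.at_two hp2]
  have h8 : z ^ 8 = 1 := by rw [show 8 = 4 * 2 by rfl, pow_mul, hz]; simp
  have hco : Nat.Coprime 8 p := by
    rw [show 8 = 2 ^ 3 by rfl]
    exact Nat.Coprime.pow_left 3 ((Nat.coprime_two_left).2 hpodd)
  have hσz := hσ.1 z 8 (by norm_num) hco h8
  apply sg_eq σ 2 (by norm_num) (z - z ^ 3)
  · push_cast
    linear_combination (z^2 - 2) * hz
  · rw [map_sub, map_pow, hσz, ZMod.χ₈_nat_eq_if_mod_eight, pow_eq_pow_mod p h8]
    have : p % 8 < 8 := Nat.mod_lt _ (by norm_num)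
    have h2 : p % 8 % 2 = 1 := by have := Nat.odd_iff.1 hpodd; omega
    have hp21 : p % 2 = 1 := Nat.odd_iff.1 hpodd
    rw [hp21]
    generalize p % 8 = j at *
    interval_cases j <;> simp at h2 ⊢
    · linear_combination (z^5 - z) * hz
    · linear_combination (z - z^11 + z^7 - z^3) * hz
    · linear_combination (z^3 - z - z^17 + z ^ 13 - z^9+z^5) * hz

theorem sg_odd_prime [Fact p.Prime] (hpodd : Odd p) (hσ : IsSigmaPType p σ) (q : ℕ)
    [Fact q.Prime] (hq2 : q ≠ 2) (hqp : q ≠ p) :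
    sg σ q = legendreSym p q := by
  have hp2 : p ≠ 2 := by rintro rfl; exact absurd hpodd (by decide)
  have hq := (Fact.out : q.Prime)
  have hqodd : q % 2 = 1 := hq.mod_two_eq_one_iff_ne_two.2 hq2
  have hp := (Fact.out : p.Prime)
  have hcop : Nat.Coprime q p := (Nat.coprime_primes hq hp).2 hqp
  have : NeZero (q : Qbar) := ⟨by exact_mod_cast hq.ne_zero⟩
  obtain ⟨z, hz⟩ := HasEnoughRootsOfUnity.exists_primitiveRoot Qbar q
  set ψ := AddChar.zmodChar q hz.pow_eq_one with hψ
  have hψp : ψ.IsPrimitive := AddChar.zmodChar_primitive_of_primitive_root q hz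
  set χ := (quadraticChar (ZMod q)).ringHomComp (Int.castRingHom Qbar) with hχ
  have hinj : Function.Injective (Int.castRingHom Qbar) := Int.cast_injective
  have hrc : ringChar (ZMod q) ≠ 2 := by rwa [ZMod.ringChar_zmod_n]
  have hχ1 : χ ≠ 1 := by
    rw [hχ, MulChar.ringHomComp_ne_one_iff hinj]
    exact quadraticChar_ne_one hrc
  have hχ2 : χ.IsQuadratic := (quadraticChar_isQuadratic (ZMod q)).comp _
  have hsq := gaussSum_sq hχ1 hχ2 hψp
  have hunit : IsUnit (p : ZMod q) := (ZMod.isUnit_iff_coprime p q).2 hcop.symm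
  have hshift := gaussSum_mulShift χ ψ hunit.unit
  have hσg : σ (gaussSum χ ψ) = gaussSum χ (AddChar.mulShift ψ (hunit.unit : ZMod q)) := by
    unfold gaussSum
    rw [map_sum]
    refine Finset.sum_congr rfl fun a _ => ?_
    rw [map_mul, AddChar.mulShift_apply, IsUnit.unit_spec]
    congr 1
    · simp [hχ]
    · rw [hψ, AddChar.zmodChar_apply, map_pow, hσ.1 z q hq.pos hcop hz.pow_eq_one,
        ← pow_mul, ← AddChar.zmodChar_apply' hz.pow_eq_one]
      congr 1
      push_cast
      rw [ZMod.natCast_val, ZMod.cast_id]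
  have hL : (χ (hunit.unit : ZMod q)) = ((legendreSym q p : ℤ) : Qbar) := by
    simp [hχ, legendreSym]
  have hLsq : legendreSym q p * legendreSym q p = 1 := by
    rw [← sq]
    apply legendreSym.sq_one
    rw [Int.cast_natCast]
    exact hunit.ne_zero
  have hqn : (q : ℤ) ≠ 0 := by exact_mod_cast hq.ne_zero
  have hm1 : (-1 : ℤ) ^ (q / 2) ≠ 0 := pow_ne_zero _ (by norm_num)
  have key : sg σ ((-1) ^ (q / 2) * q) = legendreSym q p := by
    apply sg_eq σ _ (mul_ne_zero hm1 hqn) (gaussSum χ ψ)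
    · rw [hsq, ZMod.card]
      have : χ (-1) = (((-1) ^ (q / 2) : ℤ) : Qbar) := by
        rw [← ZMod.χ₄_eq_neg_one_pow hqodd, ← legendreSym.at_neg_one hq2]
        simp [hχ, legendreSym]
      rw [this]; push_cast; rfl
    · rw [hσg, ← hshift, hL, ← mul_assoc]
      have : ((legendreSym q p : ℤ) : Qbar) * (legendreSym q p : ℤ) = 1 := by exact_mod_cast hLsq
      rw [this, one_mul]
  rw [sg_mul σ _ _ hm1 hqn, sg_pow σ _ (by norm_num), sg_neg_one p σ hpodd hσ] at key
  have hqr := legendreSym.quadratic_reciprocity' hp2 hq2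
  have hpd : (p - 1) / 2 = p / 2 := by have := Nat.odd_iff.1 hpodd; omega
  rw [hqr, hpd, ← pow_mul] at key
  exact mul_left_cancel₀ (pow_ne_zero _ (by norm_num)) key

theorem sg_coprime [Fact p.Prime] (hpodd : Odd p) (hσ : IsSigmaPType p σ) (m : ℕ) :
    ¬ p ∣ m → sg σ m = legendreSym p m := by
  have hp := (Fact.out : p.Prime)
  induction m using Nat.recOnMul with
  | zero => simp
  | one => simp [sg_one]
  | prime q hq =>
    intro h
    have := Fact.mk hq
    by_cases h2 : q = 2
    · subst h2; exact sg_two p σ hpodd hσ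
    · exact sg_odd_prime p σ hpodd hσ q h2 (by rintro rfl; simp at h)
  | mul a b iha ihb =>
    intro h
    have ha : ¬ p ∣ a := fun h' => h (h'.mul_right _)
    have hb : ¬ p ∣ b := fun h' => h (h'.mul_left _)
    have ha0 : (a : ℤ) ≠ 0 := by rintro h0; apply ha; simp [show a = 0 by exact_mod_cast h0]
    have hb0 : (b : ℤ) ≠ 0 := by rintro h0; apply hb; simp [show b = 0 by exact_mod_cast h0]
    push_cast
    rw [sg_mul σ _ _ ha0 hb0, legendreSym.mul, iha ha, ihb hb]
end NT

/-- Contribution of a part to the charge of the `r`-th twisted runner. -/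
def ch (t r a : ℕ) : ℤ := (if a % t = r then 1 else 0) - (if a % t = t - r then 1 else 0)

/-- Charge of the `r`-th twisted runner. -/
def charge (t r : ℕ) (P : BarPartition) : ℤ := ∑ a ∈ P.parts, ch t r a

theorem charge_removal (t r : ℕ) (h1 : 1 ≤ r) (h2 : 2 * r < t) (P Q : BarPartition)
    (h : BarRemoval t P Q) : charge t r P = charge t r Q := by
  unfold charge
  rcases h with ⟨a, ha, hta, hna, hQ⟩ | ⟨ht, hQ⟩ | ⟨a, ha, b, hb, hab, hs, hQ⟩
  · rw [hQ, Finset.sum_insert (by simp [hna]), ← Finset.add_sum_erase _ _ ha]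
    congr 1
    unfold ch
    rw [← Nat.mod_eq_sub_mod hta.le]
  · rw [hQ, ← Finset.add_sum_erase _ _ ht]
    have : ch t r t = 0 := by
      unfold ch
      rw [Nat.mod_self, if_neg (by omega), if_neg (by omega)]; rfl
    rw [this, zero_add]
  · have hb' : b ∈ P.parts.erase a := Finset.mem_erase.2 ⟨hab.symm, hb⟩
    rw [hQ, ← Finset.add_sum_erase _ _ ha, ← Finset.add_sum_erase _ _ hb', ← add_assoc]
    have ha0 : a ≠ 0 := fun h => P.zero_not_mem (h ▸ ha)
    have hb0 : b ≠ 0 := fun h => P.zero_not_mem (h ▸ hb)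
    have : ch t r a + ch t r b = 0 := by
      unfold ch
      rw [Nat.mod_eq_of_lt (by omega : a < t), Nat.mod_eq_of_lt (by omega : b < t)]
      split_ifs <;> omega
    rw [this, zero_add]

theorem charge_star (t r : ℕ) (h1 : 1 ≤ r) (h2 : 2 * r < t) (P Q : BarPartition)
    (h : Relation.ReflTransGen (BarRemoval t) P Q) : charge t r P = charge t r Q := by
  induction h with
  | refl => rfl
  | tail _ h ih => rw [ih, charge_removal t r h1 h2 _ _ h]

/-- The normalised indicator of the twisted runner as a finitely supported function. -/
noncomputable def ph (t r : ℕ) (P : BarPartition) : ℤ →₀ ℤ :=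
  ∑ a ∈ P.parts, ((if a % t = r then Finsupp.single ((a / t : ℕ) : ℤ) 1 else 0) -
    (if a % t = t - r then Finsupp.single (-((a / t : ℕ) : ℤ) - 1) 1 else 0))

theorem divmod_iff (t s a n : ℕ) (hs : s < t) : a = t * n + s ↔ a % t = s ∧ a / t = n := by
  constructor
  · rintro rfl
    constructor
    · rw [Nat.mul_add_mod, Nat.mod_eq_of_lt hs]
    · rw [Nat.mul_add_div (by omega), Nat.div_eq_of_lt hs, add_zero]
  · rintro ⟨rfl, rfl⟩
    exact (Nat.div_add_mod a t).symm

open Classical in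
theorem ph_apply (t r : ℕ) (h1 : 1 ≤ r) (h2 : 2 * r < t) (P : BarPartition) (i : ℤ) :
    ph t r P i = (if i ∈ twistedRunner t r P then 1 else 0) - (if i < 0 then 1 else 0) := by
  unfold ph
  rw [Finsupp.finsetSum_apply]
  rcases lt_or_ge i 0 with hi | hi
  · obtain ⟨j, hj⟩ : ∃ j : ℕ, i = -(j : ℤ) - 1 := ⟨(-(i+1)).toNat, by omega⟩
    have hmem : i ∈ twistedRunner t r P ↔ t * j + (t - r) ∉ P.parts := by
      simp only [twistedRunner, Set.mem_ofPred_eq]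
      rw [show (-(i+1)).toNat = j by omega]
      constructor
      · rintro (h | h)
        · omega
        · exact h.2
      · exact fun h => Or.inr ⟨hi, h⟩
    have : ∀ a ∈ P.parts, ((if a % t = r then Finsupp.single ((a / t : ℕ) : ℤ) (1 : ℤ) else 0) -
      (if a % t = t - r then Finsupp.single (-((a / t : ℕ) : ℤ) - 1) 1 else 0) : ℤ →₀ ℤ) i =
        if a = t * j + (t - r) then (-1 : ℤ) else 0 := by
      intro a _
      have hd := divmod_iff t (t - r) a j (by omega)
      rw [Finsupp.sub_apply]
      have e1 : (if a % t = r then Finsupp.single ((a / t : ℕ) : ℤ) (1 : ℤ) else 0 : ℤ →₀ ℤ) i = 0 := by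
        split_ifs
        · rw [Finsupp.single_apply, if_neg (by generalize a / t = k; omega)]
        · rfl
      rw [e1]
      by_cases hc : a % t = t - r
      · rw [if_pos hc, Finsupp.single_apply]
        by_cases hq : a / t = j
        · rw [if_pos (by omega), if_pos (hd.2 ⟨hc, hq⟩)]; rfl
        · rw [if_neg (by omega), if_neg (fun h => hq (hd.1 h).2)]; rfl
      · rw [if_neg hc, if_neg (fun h => hc (hd.1 h).1)]; rfl
    rw [Finset.sum_congr rfl this, Finset.sum_ite_eq', if_pos hi]
    by_cases hm : t * j + (t - r) ∈ P.parts
    · rw [if_pos hm, if_neg (by rw [hmem]; simpa using hm)]; rfl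
    · rw [if_neg hm, if_pos (hmem.2 hm)]; rfl
  · obtain ⟨j, rfl⟩ : ∃ j : ℕ, i = (j : ℤ) := ⟨i.toNat, by omega⟩
    have hmem : (j : ℤ) ∈ twistedRunner t r P ↔ t * j + r ∈ P.parts := by
      simp only [twistedRunner, Set.mem_ofPred_eq]
      rw [Int.toNat_natCast]
      constructor
      · rintro (h | h)
        · exact h.2
        · omega
      · exact fun h => Or.inl ⟨hi, h⟩
    have : ∀ a ∈ P.parts, ((if a % t = r then Finsupp.single ((a / t : ℕ) : ℤ) (1 : ℤ) else 0) -
      (if a % t = t - r then Finsupp.single (-((a / t : ℕ) : ℤ) - 1) 1 else 0) : ℤ →₀ ℤ) (j : ℤ) =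
        if a = t * j + r then (1 : ℤ) else 0 := by
      intro a _
      have hd := divmod_iff t r a j (by omega)
      rw [Finsupp.sub_apply]
      have e1 : (if a % t = t - r then
          Finsupp.single (-((a / t : ℕ) : ℤ) - 1) (1 : ℤ) else 0 : ℤ →₀ ℤ) (j : ℤ) = 0 := by
        split_ifs
        · rw [Finsupp.single_apply, if_neg (by generalize a / t = k; omega)]
        · rfl
      rw [e1]
      by_cases hc : a % t = r
      · rw [if_pos hc, Finsupp.single_apply]
        by_cases hq : a / t = j
        · rw [if_pos (by omega), if_pos (hd.2 ⟨hc, hq⟩)]; rfl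
        · rw [if_neg (by omega), if_neg (fun h => hq (hd.1 h).2)]; rfl
      · rw [if_neg hc, if_neg (fun h => hc (hd.1 h).1)]; rfl
    rw [Finset.sum_congr rfl this, Finset.sum_ite_eq', if_neg (by omega : ¬ (j : ℤ) < 0), sub_zero]
    by_cases hm : t * j + r ∈ P.parts
    · rw [if_pos hm, if_pos (hmem.2 hm)]
    · rw [if_neg hm, if_neg (fun h => hm (hmem.1 h))]

theorem lin_ph (t r : ℕ) (P : BarPartition) (F : ℤ → ℤ) :
    Finsupp.linearCombination ℤ F (ph t r P) = ∑ a ∈ P.parts,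
      ((if a % t = r then F ((a / t : ℕ) : ℤ) else 0) -
       (if a % t = t - r then F (-((a / t : ℕ) : ℤ) - 1) else 0)) := by
  unfold ph
  rw [map_sum]
  refine Finset.sum_congr rfl fun a _ => ?_
  rw [map_sub]
  split_ifs <;> simp

/-- Difference of the indicators of `i < c` and `i < 0`. -/
noncomputable def ps (c : ℤ) : ℤ →₀ ℤ :=
  ∑ i ∈ Finset.Ico 0 c, Finsupp.single i 1 - ∑ i ∈ Finset.Ico c 0, Finsupp.single i 1

theorem ps_apply (c i : ℤ) :
    ps c i = (if i < c then 1 else 0) - (if i < 0 then 1 else 0) := by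
  unfold ps
  rw [Finsupp.sub_apply, Finsupp.finsetSum_apply, Finsupp.finsetSum_apply]
  simp only [Finsupp.single_apply, Finset.sum_ite_eq', Finset.mem_Ico]
  split_ifs <;> omega

theorem ps_one (c : ℤ) : Finsupp.linearCombination ℤ (fun _ => (1 : ℤ)) (ps c) = c := by
  unfold ps
  simp only [map_sub, map_sum, Finsupp.linearCombination_single, smul_eq_mul, mul_one,
    Finset.sum_const, Int.card_Ico, nsmul_eq_mul]
  omega

theorem ps_id (c : ℤ) : 2 * Finsupp.linearCombination ℤ (fun i => i) (ps c) = c * (c - 1) := by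
  have hstep : ∀ d : ℤ, ps (d + 1) = ps d + Finsupp.single d 1 := by
    intro d
    ext i
    rw [Finsupp.add_apply, ps_apply, ps_apply, Finsupp.single_apply]
    split_ifs <;> omega
  have hs : ∀ d : ℤ, Finsupp.linearCombination ℤ (fun i => i) (ps (d + 1)) =
      Finsupp.linearCombination ℤ (fun i : ℤ => i) (ps d) + d := by
    intro d
    rw [hstep, map_add]; simp
  induction c using Int.induction_on with
  | zero => simp [ps]
  | succ n ih => rw [hs, mul_add, ih]; ring
  | pred n ih =>
    have := hs (-(n : ℤ) - 1)
    rw [sub_add_cancel] at this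
    rw [this] at ih
    linarith

/-- First moment of the runner. -/
noncomputable def mom (t r : ℕ) (P : BarPartition) : ℤ :=
  Finsupp.linearCombination ℤ (fun i => i) (ph t r P)

theorem charge_eq (t r : ℕ) (P : BarPartition) :
    charge t r P = Finsupp.linearCombination ℤ (fun _ => (1 : ℤ)) (ph t r P) := by
  rw [lin_ph]; rfl

theorem ph_shift (t r : ℕ) (h1 : 1 ≤ r) (h2 : 2 * r < t) (P Q : BarPartition) (c : ℤ)
    (h : twistedRunner t r Q = (fun i => i + c) '' twistedRunner t r P) :
    ph t r Q = Finsupp.mapDomain (fun i => i + c) (ph t r P) + ps c := by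
  classical
  ext i
  have hi : i = (fun i => i + c) (i - c) := by simp
  have hinj : Function.Injective (fun i : ℤ => i + c) := add_left_injective c
  have e : Finsupp.mapDomain (fun i => i + c) (ph t r P) i = ph t r P (i - c) := by
    conv_lhs => rw [hi]
    exact Finsupp.mapDomain_apply hinj _ _
  have hm : i ∈ twistedRunner t r Q ↔ i - c ∈ twistedRunner t r P := by
    rw [h]
    conv_lhs => rw [hi]
    exact hinj.mem_set_image
  rw [Finsupp.add_apply, e, ph_apply t r h1 h2, ph_apply t r h1 h2, ps_apply]
  simp only [hm]
  have : (i - c < 0) ↔ i < c := by omega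
  simp only [this]
  ring

theorem inv_shift (t r : ℕ) (h1 : 1 ≤ r) (h2 : 2 * r < t) (P Q : BarPartition) (c : ℤ)
    (h : twistedRunner t r Q = (fun i => i + c) '' twistedRunner t r P) :
    2 * mom t r Q - charge t r Q * (charge t r Q - 1) =
      2 * mom t r P - charge t r P * (charge t r P - 1) := by
  have hps := ph_shift t r h1 h2 P Q c h
  have hc : charge t r Q = charge t r P + c := by
    rw [charge_eq, hps, map_add, ps_one, Finsupp.linearCombination_mapDomain, charge_eq]
    rfl
  have hm : mom t r Q = mom t r P + c * charge t r P +
      Finsupp.linearCombination ℤ (fun i => i) (ps c) := by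
    unfold mom
    rw [hps, map_add, Finsupp.linearCombination_mapDomain, charge_eq]
    congr 1
    rw [lin_ph, lin_ph, lin_ph, Finset.mul_sum, ← Finset.sum_add_distrib]
    refine Finset.sum_congr rfl fun a _ => ?_
    simp only [Function.comp]
    split_ifs <;> ring
  have := ps_id c
  rw [hc, hm]
  linear_combination this

theorem core_shift (t r : ℕ) (h1 : 1 ≤ r) (h2 : 2 * r < t) (K : BarPartition)
    (hK : IsBarCore t K) :
    ∃ c : ℤ, twistedRunner t r BarPartition.empty = (fun i => i + c) '' twistedRunner t r K := by
  have slide : ∀ a, t < a → a ∈ K.parts → a - t ∈ K.parts := by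
    intro a hta ha
    by_contra hna
    refine hK ⟨insert (a - t) (K.parts.erase a), ?_⟩ (Or.inl ⟨a, ha, hta, hna, rfl⟩)
    intro h0
    rcases Finset.mem_insert.1 h0 with h | h
    · omega
    · exact K.zero_not_mem (Finset.mem_of_mem_erase h)
  have pair : r ∈ K.parts → t - r ∈ K.parts → False := by
    intro ha hb
    refine hK ⟨(K.parts.erase r).erase (t - r), ?_⟩
      (Or.inr (Or.inr ⟨r, ha, t - r, hb, by omega, by omega, rfl⟩))
    intro h
    exact K.zero_not_mem (Finset.mem_of_mem_erase (Finset.mem_of_mem_erase h))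
  have down : ∀ i : ℤ, i + 1 ∈ twistedRunner t r K → i ∈ twistedRunner t r K := by
    intro i hi
    simp only [twistedRunner, Set.mem_ofPred_eq] at hi ⊢
    rcases lt_trichotomy i (-1) with h | h | h
    · right
      refine ⟨by omega, fun hmem => ?_⟩
      rcases hi with hi | hi
      · omega
      · apply hi.2
        have e : (-(i + 1)).toNat = (-(i + 1 + 1)).toNat + 1 := by omega
        rw [e, mul_add, mul_one] at hmem
        have := slide _ (by omega) hmem
        rwa [show t * (-(i + 1 + 1)).toNat + t + (t - r) - t
          = t * (-(i + 1 + 1)).toNat + (t - r) by omega] at this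
    · subst h
      right
      refine ⟨by omega, fun hmem => ?_⟩
      rcases hi with hi | hi
      · apply pair
        · simpa using hi.2
        · simpa using hmem
      · omega
    · left
      refine ⟨by omega, ?_⟩
      rcases hi with hi | hi
      · have e : (i + 1).toNat = i.toNat + 1 := by omega
        have h3 := hi.2
        rw [e, mul_add, mul_one] at h3
        have := slide _ (by omega) h3
        rwa [show t * i.toNat + t + r - t = t * i.toNat + r by omega] at this
      · omega
  have le_size : ∀ a ∈ K.parts, a ≤ K.size := fun a ha =>
    Finset.single_le_sum (f := fun a => a) (fun _ _ => Nat.zero_le _) ha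
  have bdd : ∀ i ∈ twistedRunner t r K, i ≤ (K.size : ℤ) := by
    intro i hi
    rcases hi with hi | hi
    · have h3 := le_size _ hi.2
      have h4 : i.toNat ≤ t * i.toNat := Nat.le_mul_of_pos_left _ (by omega)
      omega
    · omega
  have nonemp : ∃ i, i ∈ twistedRunner t r K := by
    refine ⟨-(K.size : ℤ) - 1, Or.inr ⟨by omega, fun hmem => ?_⟩⟩
    rw [show (-(-(K.size : ℤ) - 1 + 1)).toNat = K.size by omega] at hmem
    have h3 := le_size _ hmem
    have h4 : K.size ≤ t * K.size := Nat.le_mul_of_pos_left _ (by omega)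
    omega
  obtain ⟨g, hg, hgmax⟩ := Int.exists_greatest_of_bdd ⟨_, bdd⟩ nonemp
  have hX : ∀ i, i ∈ twistedRunner t r K ↔ i ≤ g := by
    intro i
    refine ⟨hgmax i, fun hi => ?_⟩
    induction i, hi using Int.leInductionDown with
    | base => exact hg
    | pred n _ ih => exact down _ (by simpa using ih)
  have hE : ∀ i, i ∈ twistedRunner t r BarPartition.empty ↔ i < 0 := by
    intro i; simp [twistedRunner, BarPartition.empty]
  refine ⟨-(g + 1), ?_⟩
  ext i
  rw [hE]
  constructor
  · intro hi
    exact ⟨i + (g + 1), (hX _).2 (by omega), by simp only; ring⟩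
  · rintro ⟨j, hj, rfl⟩
    have := (hX _).1 hj
    simp only
    omega

theorem core_mul (t : ℕ) (ht : 0 < t) (K : BarPartition) (hK : IsBarCore t K) (k : ℕ) :
    t * k ∉ K.parts := by
  induction k with
  | zero => simpa using K.zero_not_mem
  | succ k ih =>
    intro hmem
    rcases Nat.eq_zero_or_pos k with rfl | hk
    · refine hK ⟨K.parts.erase t, fun h => K.zero_not_mem (Finset.mem_of_mem_erase h)⟩
        (Or.inr (Or.inl ⟨by simpa using hmem, rfl⟩))
    · have hpos : 0 < t * k := Nat.mul_pos ht hk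
      rw [mul_add, mul_one] at hmem
      refine hK ⟨insert (t * k) (K.parts.erase (t * k + t)), ?_⟩
        (Or.inl ⟨_, hmem, by omega, by simpa using ih, by simp⟩)
      intro h0
      rcases Finset.mem_insert.1 h0 with h | h
      · omega
      · exact K.zero_not_mem (Finset.mem_of_mem_erase h)

/-- Index of the pair of runners containing `a`. -/
def fb (t a : ℕ) : ℕ := min (a % t) (t - a % t)

theorem fb_iff (t r a : ℕ) (h1 : 1 ≤ r) (h2 : 2 * r < t) :
    fb t a = r ↔ a % t = r ∨ a % t = t - r := by
  have := Nat.mod_lt a (by omega : t > 0)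
  unfold fb; omega

theorem fb_zero (t a : ℕ) (ht : 0 < t) : fb t a = 0 ↔ a % t = 0 := by
  have := Nat.mod_lt a ht
  unfold fb; omega

/-- Parts in the pair of runners `r`, `t - r`. -/
def Fi (t r : ℕ) (P : BarPartition) : Finset ℕ := P.parts.filter (fun a => fb t a = r)

/-- Upper-half indicator. -/
def up (t a : ℕ) : ℕ := if t < 2 * (a % t) then 1 else 0

theorem energy_eq (t r : ℕ) (h1 : 1 ≤ r) (h2 : 2 * r < t) (P : BarPartition) :
    ∑ a ∈ Fi t r P, (a : ℤ) = t * mom t r P + r * charge t r P := by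
  unfold mom
  rw [charge_eq, lin_ph, lin_ph, Finset.mul_sum, Finset.mul_sum, ← Finset.sum_add_distrib, Fi,
    Finset.sum_filter]
  refine Finset.sum_congr rfl fun a _ => ?_
  simp only [fb_iff t r a h1 h2]
  have hd : (t : ℤ) * ((a / t : ℕ) : ℤ) + ((a % t : ℕ) : ℤ) = a := by
    exact_mod_cast Nat.div_add_mod a t
  by_cases hr : a % t = r
  · have hn : ¬ a % t = t - r := by omega
    simp only [hr, true_or, if_true] at hd ⊢
    rw [if_neg (by omega), if_neg (by omega)]
    linarith
  · by_cases hs : a % t = t - r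
    · rw [hs, Nat.cast_sub (by omega)] at hd
      rw [if_pos (Or.inr hs), if_neg hr, if_neg hr, if_pos hs, if_pos hs]
      linarith
    · simp [hr, hs]

theorem charge_up (t r : ℕ) (h1 : 1 ≤ r) (h2 : 2 * r < t) (P : BarPartition) :
    ∑ a ∈ Fi t r P, (1 - 2 * (up t a : ℤ)) = charge t r P := by
  rw [Fi, Finset.sum_filter]
  unfold charge
  refine Finset.sum_congr rfl fun a _ => ?_
  simp only [fb_iff t r a h1 h2, ch, up]
  split_ifs <;> omega

section main
variable (t : ℕ) (l K M : BarPartition)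

theorem fib_charge (hK : IsBarCoreOf t l K) (hM : IsBarCocoreOf t l M) (r : ℕ) (h1 : 1 ≤ r)
    (h2 : 2 * r < t) : charge t r l = charge t r K ∧ charge t r M = 0 := by
  refine ⟨charge_star t r h1 h2 _ _ hK.1, ?_⟩
  rw [charge_star t r h1 h2 _ _ hM.1]
  rfl

theorem fib_size_pos (hK : IsBarCoreOf t l K) (hM : IsBarCocoreOf t l M) (r : ℕ) (h1 : 1 ≤ r)
    (h2 : 2 * r < t) :
    ∑ a ∈ Fi t r l, (a : ℤ) = ∑ a ∈ Fi t r K, (a : ℤ) + ∑ a ∈ Fi t r M, (a : ℤ) := by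
  obtain ⟨hc, hc0⟩ := fib_charge t l K M hK hM r h1 h2
  obtain ⟨c, hs⟩ := hM.2.2 r h1 h2
  obtain ⟨d, hs'⟩ := core_shift t r h1 h2 K hK.2
  have i1 := inv_shift t r h1 h2 _ _ c hs
  have i2 := inv_shift t r h1 h2 _ _ d hs'
  have z1 : charge t r BarPartition.empty = 0 := rfl
  have z2 : mom t r BarPartition.empty = 0 := by simp [mom, ph, BarPartition.empty]
  rw [z1, z2] at i2
  rw [energy_eq t r h1 h2, energy_eq t r h1 h2, energy_eq t r h1 h2]
  rw [hc0] at i1 ⊢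
  rw [hc] at i1 ⊢
  have : mom t r l = mom t r K + mom t r M := by linarith
  rw [this]; ring

theorem fib_zero_K (ht : 0 < t) (hK : IsBarCoreOf t l K) : Fi t 0 K = ∅ := by
  rw [Fi, Finset.filter_eq_empty_iff]
  intro a ha h
  rw [fb_zero t a ht] at h
  obtain ⟨k, rfl⟩ := Nat.dvd_of_mod_eq_zero h
  exact core_mul t ht K hK.2 k ha

theorem fib_zero_M (ht : 0 < t) (hM : IsBarCocoreOf t l M) : Fi t 0 M = Fi t 0 l := by
  ext a
  simp only [Fi, Finset.mem_filter]
  rw [fb_zero t a ht]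
  constructor <;> rintro ⟨ha, h⟩ <;> refine ⟨?_, h⟩ <;>
    obtain ⟨k, rfl⟩ := Nat.dvd_of_mod_eq_zero h
  · exact (hM.2.1 k).2 ha
  · exact (hM.2.1 k).1 ha

theorem fb_maps (ht : Odd t) (P : BarPartition) :
    ∀ a ∈ P.parts, fb t a ∈ Finset.range (t / 2 + 1) := by
  intro a _
  have := Nat.odd_iff.1 ht
  rw [Finset.mem_range]; unfold fb; omega

theorem glob_sum (ht : Odd t) (P : BarPartition) (f : ℕ → ℤ) :
    ∑ a ∈ P.parts, f a = ∑ r ∈ Finset.range (t / 2 + 1), ∑ a ∈ Fi t r P, f a :=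
  (Finset.sum_fiberwise_of_maps_to (fb_maps t ht P) f).symm

theorem glob_prod (ht : Odd t) (P : BarPartition) (f : ℕ → ℤ) :
    ∏ a ∈ P.parts, f a = ∏ r ∈ Finset.range (t / 2 + 1), ∏ a ∈ Fi t r P, f a :=
  (Finset.prod_fiberwise_of_maps_to (fb_maps t ht P) f).symm

theorem glob_add (ht : Odd t) (hK : IsBarCoreOf t l K) (hM : IsBarCocoreOf t l M) (f : ℕ → ℤ)
    (hf : ∀ r, 1 ≤ r → 2 * r < t →
      ∑ a ∈ Fi t r l, f a = ∑ a ∈ Fi t r K, f a + ∑ a ∈ Fi t r M, f a) :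
    ∑ a ∈ l.parts, f a = ∑ a ∈ K.parts, f a + ∑ a ∈ M.parts, f a := by
  have h2 := Nat.odd_iff.1 ht
  rw [glob_sum t ht, glob_sum t ht, glob_sum t ht, ← Finset.sum_add_distrib]
  refine Finset.sum_congr rfl fun r hr => ?_
  rw [Finset.mem_range] at hr
  rcases Nat.eq_zero_or_pos r with rfl | h1
  · rw [fib_zero_K t l K ht.pos hK, fib_zero_M t l M ht.pos hM]; simp
  · exact hf r h1 (by omega)

theorem glob_size (ht : Odd t) (hK : IsBarCoreOf t l K) (hM : IsBarCocoreOf t l M) :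
    l.size = K.size + M.size := by
  have := glob_add t l K M ht hK hM (fun a => (a : ℤ)) (fib_size_pos t l K M hK hM)
  unfold BarPartition.size
  zify
  exact this

theorem fib_up (hK : IsBarCoreOf t l K) (hM : IsBarCocoreOf t l M) (r : ℕ) (h1 : 1 ≤ r)
    (h2 : 2 * r < t) :
    ∑ a ∈ Fi t r l, (1 - 2 * (up t a : ℤ)) =
      ∑ a ∈ Fi t r K, (1 - 2 * (up t a : ℤ)) + ∑ a ∈ Fi t r M, (1 - 2 * (up t a : ℤ)) := by
  obtain ⟨hc, hc0⟩ := fib_charge t l K M hK hM r h1 h2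
  rw [charge_up t r h1 h2, charge_up t r h1 h2, charge_up t r h1 h2, hc, hc0, add_zero]

theorem glob_length (ht : Odd t) (hK : IsBarCoreOf t l K) (hM : IsBarCocoreOf t l M) :
    l.length + 2 * (∑ a ∈ K.parts, up t a + ∑ a ∈ M.parts, up t a) =
      K.length + M.length + 2 * ∑ a ∈ l.parts, up t a := by
  have := glob_add t l K M ht hK hM _ (fib_up t l K M hK hM)
  simp only [Finset.sum_sub_distrib, ← Finset.mul_sum, Finset.sum_const, nsmul_eq_mul,
    mul_one] at this
  unfold BarPartition.length
  zify
  linarith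

theorem fib_even (hK : IsBarCoreOf t l K) (hM : IsBarCocoreOf t l M) (r : ℕ) (h1 : 1 ≤ r)
    (h2 : 2 * r < t) : Even ((Fi t r l).card + (Fi t r K).card + (Fi t r M).card) := by
  have := fib_up t l K M hK hM r h1 h2
  simp only [Finset.sum_sub_distrib, ← Finset.mul_sum, Finset.sum_const, nsmul_eq_mul,
    mul_one] at this
  rw [Nat.even_iff]
  omega
end main

theorem theta_eq (p : ℕ) [Fact p.Prime] (hpodd : Odd p) (σ : Qbar ≃ₐ[ℚ] Qbar)
    (hσ : IsSigmaPType p σ) (r a : ℕ) (h1 : 1 ≤ r) (h2 : 2 * r < p) (h : fb p a = r) :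
    sg σ a * sg σ (-1) ^ up p a = sg σ r := by
  have hp2 : p ≠ 2 := by rintro rfl; exact absurd hpodd (by decide)
  have hnd : ¬ p ∣ r := Nat.not_dvd_of_pos_of_lt h1 (by omega)
  rw [fb_iff p r a h1 h2] at h
  have hna : ¬ p ∣ a := by rw [Nat.dvd_iff_mod_eq_zero]; omega
  rw [sg_coprime p σ hpodd hσ a hna, sg_coprime p σ hpodd hσ r hnd]
  have hcast : ((a % p : ℕ) : ZMod p) = a := by simp
  rcases h with h | h
  · have : up p a = 0 := by unfold up; rw [if_neg (by omega)]
    rw [this, pow_zero, mul_one]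
    simp only [legendreSym, Int.cast_natCast]
    rw [← hcast, h]
  · have : up p a = 1 := by unfold up; rw [if_pos (by omega)]
    rw [this, pow_one]
    have e : legendreSym p a = legendreSym p (-r) := by
      simp only [legendreSym, Int.cast_natCast, Int.cast_neg]
      rw [← hcast, h, Nat.cast_sub (by omega)]; simp
    have hχ : sg σ (-1) = ZMod.χ₄ p := by
      rw [sg_neg_one p σ hpodd hσ, ZMod.χ₄_eq_neg_one_pow (Nat.odd_iff.1 hpodd)]
      congr 1
      have := Nat.odd_iff.1 hpodd; omega
    rw [e, legendreSym.at_neg hp2, ← hχ]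
    linear_combination legendreSym p r * sg_sq σ (-1)

theorem glob_theta (p : ℕ) [Fact p.Prime] (hpodd : Odd p) (σ : Qbar ≃ₐ[ℚ] Qbar)
    (hσ : IsSigmaPType p σ) (l K M : BarPartition)
    (hK : IsBarCoreOf p l K) (hM : IsBarCocoreOf p l M) :
    (∏ a ∈ l.parts, (sg σ a * sg σ (-1) ^ up p a)) *
      (∏ a ∈ K.parts, (sg σ a * sg σ (-1) ^ up p a)) *
      (∏ a ∈ M.parts, (sg σ a * sg σ (-1) ^ up p a)) = 1 := by
  have h2 := Nat.odd_iff.1 hpodd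
  rw [glob_prod p hpodd, glob_prod p hpodd, glob_prod p hpodd, ← Finset.prod_mul_distrib,
    ← Finset.prod_mul_distrib]
  apply Finset.prod_eq_one
  intro r hr
  rw [Finset.mem_range] at hr
  rcases Nat.eq_zero_or_pos r with rfl | h1
  · rw [fib_zero_K p l K hpodd.pos hK, fib_zero_M p l M hpodd.pos hM, Finset.prod_empty, mul_one,
      ← Finset.prod_mul_distrib]
    apply Finset.prod_eq_one
    intro a _
    have e1 := sg_sq σ a
    have e2 : (sg σ (-1) ^ up p a) * (sg σ (-1) ^ up p a) = 1 := by
      rw [← mul_pow, sg_sq, one_pow]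
    rw [mul_mul_mul_comm, e1, e2, one_mul]
  · have hr2 : 2 * r < p := by omega
    have hc : ∀ P : BarPartition, ∏ a ∈ Fi p r P, (sg σ a * sg σ (-1) ^ up p a) =
        sg σ r ^ (Fi p r P).card := by
      intro P
      apply Finset.prod_eq_pow_card
      intro a ha
      exact theta_eq p hpodd σ hσ r a h1 hr2 (Finset.mem_filter.1 ha).2
    rw [hc, hc, hc, ← pow_add, ← pow_add]
    obtain ⟨k, hk⟩ := fib_even p l K M hK hM r h1 hr2
    rw [hk, pow_add, ← mul_pow, sg_sq, one_pow]

theorem length_le (P : BarPartition) : P.length ≤ P.size := by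
  unfold BarPartition.length BarPartition.size
  rw [Finset.card_eq_sum_ones]
  apply Finset.sum_le_sum
  intro a ha
  have : a ≠ 0 := fun h => P.zero_not_mem (h ▸ ha)
  omega

theorem sgn_neg_odd (P : BarPartition) (h : P.sgn = -1) : (P.size - P.length) % 2 = 1 := by
  by_contra hc
  have : Even (P.size - P.length) := by rw [Nat.even_iff]; omega
  unfold BarPartition.sgn at h
  rw [this.neg_one_pow] at h
  norm_num at h

theorem prod_ne (P : BarPartition) : ∏ a ∈ P.parts, (a : ℤ) ≠ 0 := by
  rw [Finset.prod_ne_zero_iff]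
  intro b hb h
  have : b = 0 := by exact_mod_cast h
  exact P.zero_not_mem (this ▸ hb)

theorem disc_ne (P : BarPartition) : barDisc P ≠ 0 := by
  unfold barDisc
  have := prod_ne P
  split_ifs <;> simp_all

theorem sg_disc_odd (σ : Qbar ≃ₐ[ℚ] Qbar) (P : BarPartition)
    (h : (P.size - P.length) % 2 = 1) : sg σ (barDisc P) =
      sg σ 2 * sg σ (-1) ^ ((P.size - P.length + 1) / 2) * ∏ a ∈ P.parts, sg σ a := by
  unfold barDisc
  have h1 : (-1 : ℤ) ^ ((P.size - P.length + 1) / 2) ≠ 0 := pow_ne_zero _ (by norm_num)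
  rw [if_pos h, sg_mul σ _ _ (mul_ne_zero two_ne_zero h1) (prod_ne P), sg_mul σ _ _ two_ne_zero h1,
    sg_pow σ _ (by norm_num), sg_prod σ _ P.zero_not_mem]

theorem sg_disc_even (σ : Qbar ≃ₐ[ℚ] Qbar) (P : BarPartition)
    (h : ¬ (P.size - P.length) % 2 = 1) : sg σ (barDisc P) =
      sg σ (-1) ^ ((P.size - P.length) / 2) * ∏ a ∈ P.parts, sg σ a := by
  unfold barDisc
  have h1 : (-1 : ℤ) ^ ((P.size - P.length) / 2) ≠ 0 := pow_ne_zero _ (by norm_num)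
  rw [if_neg h, sg_mul σ _ _ h1 (prod_ne P), sg_pow σ _ (by norm_num), sg_prod σ _ P.zero_not_mem]

/-- Let `p` be an odd prime, `λ` a bar-partition with `p`-bar core `κ` and
`p`-bar cocore `μ`, and `σ` a `σ_p`-type automorphism of `ℚ̄`. If `sgn(κ) = −1` and
`sgn(μ) = −1`, then `τ(λ,σ) = (−1)^((p−1)/2)·τ(κ,σ)·τ(μ,σ)`. -/
theorem tau_barLittlewood_of_sgn_neg (p : ℕ) (hp : p.Prime) (hpodd : Odd p)
    (l κ μ : BarPartition) (hκ : IsBarCoreOf p l κ) (hμ : IsBarCocoreOf p l μ)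
    (σ : Qbar ≃ₐ[ℚ] Qbar) (hσ : IsSigmaPType p σ)
    (τl τκ τμ : ℤ)
    (hτl : ∀ α : Qbar, α ^ 2 = (barDisc l : Qbar) → σ α = (τl : Qbar) * α)
    (hτκ : ∀ α : Qbar, α ^ 2 = (barDisc κ : Qbar) → σ α = (τκ : Qbar) * α)
    (hτμ : ∀ α : Qbar, α ^ 2 = (barDisc μ : Qbar) → σ α = (τμ : Qbar) * α)
    (hsgnκ : κ.sgn = -1) (hsgnμ : μ.sgn = -1) :
    τl = (-1) ^ ((p - 1) / 2) * (τκ * τμ) := by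
  have : Fact p.Prime := ⟨hp⟩
  have hl := sg_eq σ _ (disc_ne l) _ (sqq_sq _) _ (hτl _ (sqq_sq _))
  have hk := sg_eq σ _ (disc_ne κ) _ (sqq_sq _) _ (hτκ _ (sqq_sq _))
  have hm := sg_eq σ _ (disc_ne μ) _ (sqq_sq _) _ (hτμ _ (sqq_sq _))
  have hth := glob_theta p hpodd σ hσ l κ μ hκ hμ
  have hsz := glob_size p l κ μ hpodd hκ hμ
  have hln := glob_length p l κ μ hpodd hκ hμ
  have ok := sgn_neg_odd κ hsgnκ
  have om := sgn_neg_odd μ hsgnμ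
  have b1 := length_le l
  have b2 := length_le κ
  have b3 := length_le μ
  simp only [Finset.prod_mul_distrib, Finset.prod_pow_eq_pow_sum] at hth
  rw [← hl, ← hk, ← hm, ← sg_neg_one p σ hpodd hσ, sg_disc_odd σ κ ok, sg_disc_odd σ μ om,
    sg_disc_even σ l (by omega)]
  generalize ∑ a ∈ l.parts, up p a = vl at *
  generalize ∑ a ∈ κ.parts, up p a = vk at *
  generalize ∑ a ∈ μ.parts, up p a = vm at *
  have tsq : ∀ P : BarPartition, (∏ a ∈ P.parts, sg σ a) * (∏ a ∈ P.parts, sg σ a) = 1 := by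
    intro P
    rw [← Finset.prod_mul_distrib]
    exact Finset.prod_eq_one fun a _ => sg_sq σ a
  have tl := tsq l
  have tk := tsq κ
  have tm := tsq μ
  have e2 := sg_sq σ 2
  generalize ∏ a ∈ l.parts, sg σ a = Tl at *
  generalize ∏ a ∈ κ.parts, sg σ a = Tk at *
  generalize ∏ a ∈ μ.parts, sg σ a = Tm at *
  generalize sg σ 2 = s2 at *
  obtain ⟨x, hx⟩ : ∃ x, κ.size - κ.length = 2 * x + 1 := ⟨(κ.size - κ.length) / 2, by omega⟩
  obtain ⟨y, hy⟩ : ∃ y, μ.size - μ.length = 2 * y + 1 := ⟨(μ.size - μ.length) / 2, by omega⟩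
  have hz : (l.size - l.length) / 2 + vl = x + y + 1 + vk + vm := by omega
  rw [hx, hy, show (2 * x + 1 + 1) / 2 = x + 1 by omega, show (2 * y + 1 + 1) / 2 = y + 1 by omega]
  generalize (l.size - l.length) / 2 = z at *
  have hpm := sg_pm σ (-1)
  have esq := sg_sq σ (-1)
  generalize sg σ (-1) = ε at *
  have q : ∀ n : ℕ, ε ^ n * ε ^ n = 1 := fun n => by rw [← mul_pow, esq, one_pow]
  have hz' : ε ^ z * ε ^ vl = ε ^ x * ε ^ y * ε * ε ^ vk * ε ^ vm := by
    rw [← pow_add, hz]; ring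
  have key : Tl * ε ^ vl * Tk * ε ^ vk * Tm * ε ^ vm = 1 := by rw [← hth]; ring
  have hTl : Tl = ε ^ vl * Tk * ε ^ vk * Tm * ε ^ vm := by
    calc Tl = Tl * (ε ^ vl * ε ^ vl) * (Tk * Tk) * (ε ^ vk * ε ^ vk) * (Tm * Tm) *
          (ε ^ vm * ε ^ vm) := by rw [q, q, q, tk, tm]; ring
      _ = (Tl * ε ^ vl * Tk * ε ^ vk * Tm * ε ^ vm) * (ε ^ vl * Tk * ε ^ vk * Tm * ε ^ vm) := by
          ring
      _ = _ := by rw [key, one_mul]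
  calc ε ^ z * Tl = (ε ^ z * ε ^ vl) * Tk * ε ^ vk * Tm * ε ^ vm := by rw [hTl]; ring
    _ = ε ^ x * ε ^ y * ε * Tk * Tm * (ε ^ vk * ε ^ vk) * (ε ^ vm * ε ^ vm) := by rw [hz']; ring
    _ = ε ^ x * ε ^ y * ε * Tk * Tm * (ε * ε) * (s2 * s2) := by rw [q, q, esq, e2]
    _ = _ := by rw [pow_succ, pow_succ]; ring
end

section
/- Let p be an odd prime, let m be a positive integer not divisible by p, and let σ be an automorphism of ℚ̄ over ℚ such that σ(ζ) = ζ^p for every root of unity ζ whose order is coprime to p. Then for every α ∈ ℚ̄ with α² = m one has σ(α) = (m/p)·α, where (m/p) denotes the Jacobi symbol. -/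
/-- Some square root of `m` is multiplied by the Jacobi symbol under `σ`. -/
def GoodSqrt (σ : Qbar ≃ₐ[ℚ] Qbar) (p : ℕ) (m : ℤ) : Prop :=
  ∃ β : Qbar, β ^ 2 = (m : Qbar) ∧ σ β = (jacobiSym m p : Qbar) * β

lemma GoodSqrt.mul {σ : Qbar ≃ₐ[ℚ] Qbar} {p : ℕ} {a b : ℤ}
    (ha : GoodSqrt σ p a) (hb : GoodSqrt σ p b) : GoodSqrt σ p (a * b) := by
  obtain ⟨x, hx, hx'⟩ := ha
  obtain ⟨y, hy, hy'⟩ := hb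
  refine ⟨x * y, by push_cast; rw [mul_pow, hx, hy], ?_⟩
  rw [map_mul, hx', hy', jacobiSym.mul_left]
  push_cast
  ring

lemma goodSqrt_one (σ : Qbar ≃ₐ[ℚ] Qbar) (p : ℕ) : GoodSqrt σ p 1 :=
  ⟨1, by simp, by simp [jacobiSym.one_left]⟩

lemma goodSqrt_neg_one {p : ℕ} (hpodd : Odd p) {σ : Qbar ≃ₐ[ℚ] Qbar}
    (hσ : ∀ (ζ : Qbar) (n : ℕ), 0 < n → Nat.Coprime n p → ζ ^ n = 1 → σ ζ = ζ ^ p) :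
    GoodSqrt σ p (-1) := by
  obtain ⟨z, hz⟩ := IsAlgClosed.exists_pow_nat_eq (-1 : Qbar) (n := 2) (by norm_num)
  have hz4 : z ^ 4 = 1 := by linear_combination (z ^ 2 - 1) * hz
  refine ⟨z, by simpa using hz, ?_⟩
  have hc : Nat.Coprime 4 p := by
    have : Nat.Coprime (2 ^ 2) p := Nat.Coprime.pow_left 2 (Nat.coprime_two_left.mpr hpodd)
    simpa using this
  rw [hσ z 4 (by norm_num) hc hz4, jacobiSym.at_neg_one hpodd, pow_eq_pow_mod p hz4]
  have h2 : p % 4 = 1 ∨ p % 4 = 3 := by rcases hpodd with ⟨k, rfl⟩; omega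
  rcases h2 with h | h
  · rw [ZMod.χ₄_nat_one_mod_four h, h]; simp
  · rw [ZMod.χ₄_nat_three_mod_four h, h]; push_cast; linear_combination z * hz

lemma goodSqrt_two {p : ℕ} (hpodd : Odd p) {σ : Qbar ≃ₐ[ℚ] Qbar}
    (hσ : ∀ (ζ : Qbar) (n : ℕ), 0 < n → Nat.Coprime n p → ζ ^ n = 1 → σ ζ = ζ ^ p) :
    GoodSqrt σ p 2 := by
  obtain ⟨z, hz⟩ := IsAlgClosed.exists_pow_nat_eq (-1 : Qbar) (n := 4) (by norm_num)
  have hz8 : z ^ 8 = 1 := by linear_combination (z ^ 4 - 1) * hz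
  refine ⟨z - z ^ 3, by push_cast; linear_combination (z ^ 2 - 2) * hz, ?_⟩
  have hc : Nat.Coprime 8 p := by
    have : Nat.Coprime (2 ^ 3) p := Nat.Coprime.pow_left 3 (Nat.coprime_two_left.mpr hpodd)
    simpa using this
  rw [map_sub, map_pow, hσ z 8 (by norm_num) hc hz8, jacobiSym.at_two hpodd,
    pow_eq_pow_mod p hz8, ZMod.χ₈_nat_eq_if_mod_eight]
  have h2 : p % 2 = 1 := Nat.odd_iff.mp hpodd
  have h8 : p % 8 = 1 ∨ p % 8 = 3 ∨ p % 8 = 5 ∨ p % 8 = 7 := by omega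
  rcases h8 with h | h | h | h <;> simp only [h, h2] <;> norm_num
  · linear_combination (z ^ 5 - z) * hz
  · linear_combination (-z ^ 11 + z ^ 7 - z ^ 3 + z) * hz
  · linear_combination (-z ^ 17 + z ^ 13 - z ^ 9 + z ^ 5 - z + z ^ 3) * hz

lemma goodSqrt_star {p : ℕ} (hp : p.Prime) (hpodd : Odd p) {σ : Qbar ≃ₐ[ℚ] Qbar}
    (hσ : ∀ (ζ : Qbar) (n : ℕ), 0 < n → Nat.Coprime n p → ζ ^ n = 1 → σ ζ = ζ ^ p)
    {q : ℕ} (hq : q.Prime) (hq2 : q ≠ 2) (hqp : q ≠ p) :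
    GoodSqrt σ p (ZMod.χ₄ q * q) := by
  have := Fact.mk hp
  have := Fact.mk hq
  have : NeZero (q : Qbar) := ⟨by exact_mod_cast hq.ne_zero⟩
  have hp2 : p ≠ 2 := by rintro rfl; exact absurd hpodd (by decide)
  have hF : ringChar (ZMod q) ≠ 2 := by rwa [ZMod.ringChar_zmod_n]
  obtain ⟨ζ, hζ⟩ := HasEnoughRootsOfUnity.exists_primitiveRoot Qbar q
  have hψ := AddChar.zmodChar_primitive_of_primitive_root q hζ
  generalize AddChar.zmodChar q ((IsPrimitiveRoot.iff_def ζ q).mp hζ).left = ψ at hψ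
  set χ : MulChar (ZMod q) Qbar := (quadraticChar (ZMod q)).ringHomComp (Int.castRingHom Qbar)
    with hχ
  have hχ1 : χ ≠ 1 := (MulChar.ringHomComp_ne_one_iff (RingHom.injective_int _)).mpr
    (quadraticChar_ne_one hF)
  have hχ2 : χ.IsQuadratic := (quadraticChar_isQuadratic _).comp _
  have hcop : Nat.Coprime q p := (Nat.coprime_primes hq hp).mpr hqp
  have hp0 : (p : ZMod q) ≠ 0 := by
    rw [Ne, ZMod.natCast_eq_zero_iff]
    exact fun h => hqp ((Nat.prime_dvd_prime_iff_eq hq hp).mp h)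
  have hJ : jacobiSym (ZMod.χ₄ q * q) p = quadraticChar (ZMod q) p := by
    rw [quadraticChar_odd_prime hF hp2 (by rwa [ZMod.ringChar_zmod_n]),
      ← jacobiSym.legendreSym.to_jacobiSym, legendreSym, ZMod.card]
    push_cast
    rfl
  refine ⟨gaussSum χ ψ, ?_, ?_⟩
  · rw [gaussSum_sq hχ1 hχ2 hψ, ZMod.card, hχ, MulChar.ringHomComp_apply,
      quadraticChar_neg_one hF, ZMod.card]
    simp
  · have h1 : σ (gaussSum χ ψ) = gaussSum χ (AddChar.mulShift ψ p) := by
      rw [gaussSum, gaussSum, map_sum]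
      refine Finset.sum_congr rfl fun a _ => ?_
      rw [map_mul, AddChar.mulShift_spec', hσ (ψ a) q hq.pos hcop]
      · congr 1
        simp [hχ, MulChar.ringHomComp_apply]
      · rw [← AddChar.map_nsmul_eq_pow]
        simp
    have h2 := gaussSum_mulShift χ ψ (Units.mk0 (p : ZMod q) hp0)
    rw [Units.val_mk0] at h2
    have h3 : χ p = ((quadraticChar (ZMod q) p : ℤ) : Qbar) := rfl
    have h4 : ((quadraticChar (ZMod q) p : ℤ) : Qbar) ^ 2 = 1 := by
      exact_mod_cast congrArg (Int.cast : ℤ → Qbar) (quadraticChar_sq_one hp0)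
    rw [h3] at h2
    rw [h1, hJ, ← h2]
    linear_combination (-gaussSum χ (AddChar.mulShift ψ p)) * h4

lemma goodSqrt_prime {p : ℕ} (hp : p.Prime) (hpodd : Odd p) {σ : Qbar ≃ₐ[ℚ] Qbar}
    (hσ : ∀ (ζ : Qbar) (n : ℕ), 0 < n → Nat.Coprime n p → ζ ^ n = 1 → σ ζ = ζ ^ p)
    {q : ℕ} (hq : q.Prime) (hqp : q ≠ p) : GoodSqrt σ p q := by
  rcases eq_or_ne q 2 with rfl | hq2
  · exact_mod_cast goodSqrt_two hpodd hσ
  have h := goodSqrt_star hp hpodd hσ hq hq2 hqp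
  have h2 : q % 4 = 1 ∨ q % 4 = 3 := by
    have := hq.eq_two_or_odd
    omega
  rcases h2 with h2 | h2
  · rw [ZMod.χ₄_nat_one_mod_four h2] at h
    simpa using h
  · rw [ZMod.χ₄_nat_three_mod_four h2] at h
    simpa using (goodSqrt_neg_one hpodd hσ).mul h

lemma goodSqrt_nat {p : ℕ} (hp : p.Prime) (hpodd : Odd p) {σ : Qbar ≃ₐ[ℚ] Qbar}
    (hσ : ∀ (ζ : Qbar) (n : ℕ), 0 < n → Nat.Coprime n p → ζ ^ n = 1 → σ ζ = ζ ^ p)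
    (m : ℕ) (hpm : ¬ p ∣ m) : GoodSqrt σ p m := by
  induction m using induction_on_primes with
  | zero => exact absurd (dvd_zero p) hpm
  | one => exact_mod_cast goodSqrt_one σ p
  | prime_mul q a hq ih =>
    rw [Nat.cast_mul]
    refine (goodSqrt_prime hp hpodd hσ hq ?_).mul (ih fun h => hpm (h.mul_left q))
    rintro rfl
    exact hpm (dvd_mul_right _ _)

/-- Let `p` be an odd prime, `m` a positive integer not divisible by `p`,
and `σ` an automorphism of `ℚ̄` over `ℚ` with `σ(ζ) = ζ^p` for every root of unity `ζ` of
order coprime to `p`. Then for every `α ∈ ℚ̄` with `α² = m` one has `σ(α) = (m/p)·α`, where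
`(m/p)` is the Jacobi symbol. -/
theorem sigmaP_sqrt_eq_jacobiSym_smul (p : ℕ) (hp : p.Prime) (hpodd : Odd p)
    (m : ℕ) (hm : 0 < m) (hpm : ¬ p ∣ m)
    (σ : Qbar ≃ₐ[ℚ] Qbar)
    (hσ : ∀ (ζ : Qbar) (n : ℕ), 0 < n → Nat.Coprime n p → ζ ^ n = 1 → σ ζ = ζ ^ p)
    (α : Qbar) (hα : α ^ 2 = (m : Qbar)) :
    σ α = (jacobiSym (m : ℤ) p : Qbar) * α := by
  obtain ⟨β, hβ, hβ'⟩ := goodSqrt_nat hp hpodd hσ m hpm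
  have h : α ^ 2 = β ^ 2 := by rw [hα, hβ, Int.cast_natCast]
  rcases sq_eq_sq_iff_eq_or_eq_neg.mp h with rfl | rfl
  · exact hβ'
  · rw [map_neg, hβ', mul_neg]
end
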